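/- Relation (B1): Let u be a 0-grassmannian affine permutation and let a < b, c < d be integers with b − a ≤ k, d − c ≤ k. If either a < c < b < d, or (b = c and d − a > n), then neither the composite u·t_{a,b}·t_{c,d} nor the composite u·t_{c,d}·t_{a,b} is defined. -/

import Mathlib

open Function

/-- The affine transposition `t_{a,b}` of period `n`: it exchanges `a + m*n` and
`b + m*n` for every `m : ℤ` and fixes all other integers. -/
def affT (n a b : ℤ) : ℤ → ℤ := fun i =>
  if (i - a) % n = 0 then i - a + b
  else if (i - b) % n = 0 then i - b + a
  else i

/-- `u` is an affine permutation of period `n`: a bijection of `ℤ` with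
`u (i + n) = u i + n` and `∑_{i=1}^{n} u i = n (n+1) / 2`. -/
def IsAffinePerm (n : ℤ) (u : ℤ → ℤ) : Prop :=
  Function.Bijective u ∧ (∀ i : ℤ, u (i + n) = u i + n) ∧
    ∑ i ∈ Finset.Icc (1 : ℤ) n, u i = n * (n + 1) / 2

/-- The operator `t_{a,b}` is defined at `u`:
`u a ≤ 0 < u b` and for every `a < i < b`, either `u i < u a` or `u i > u b`. -/
def DefinedAt (u : ℤ → ℤ) (a b : ℤ) : Prop :=
  u a ≤ 0 ∧ 0 < u b ∧ ∀ i : ℤ, a < i → i < b → u i < u a ∨ u b < u i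

/-- `u` is 0-grassmannian: the positions of the values `1, 2, …, n` under `u`
appear in increasing order, i.e. `u⁻¹ 1 < u⁻¹ 2 < ⋯ < u⁻¹ n`. -/
def IsGrassmannian (n : ℤ) (u : ℤ → ℤ) : Prop :=
  ∀ i j p q : ℤ, 1 ≤ i → i < j → j ≤ n → u p = i → u q = j → p < q

/-- The composite `u · t_{a,b} · t_{c,d}` is defined. -/
def Def2 (n : ℤ) (u : ℤ → ℤ) (a b c d : ℤ) : Prop :=
  DefinedAt u a b ∧ DefinedAt (u ∘ affT n a b) c d

/-- The composite `u · t_{a₁,b₁} · t_{a₂,b₂} · t_{a₃,b₃}` is defined. -/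
def Def3 (n : ℤ) (u : ℤ → ℤ) (a₁ b₁ a₂ b₂ a₃ b₃ : ℤ) : Prop :=
  DefinedAt u a₁ b₁ ∧ DefinedAt (u ∘ affT n a₁ b₁) a₂ b₂ ∧
    DefinedAt ((u ∘ affT n a₁ b₁) ∘ affT n a₂ b₂) a₃ b₃

theorem emod_ne_aux (n x : ℤ) (h1 : 0 < x) (h2 : x < n) : x % n ≠ 0 := by
  rw [Int.emod_eq_of_lt h1.le h2]; omega

theorem emod_ne_aux' (n x : ℤ) (h1 : -n < x) (h2 : x < 0) : x % n ≠ 0 := by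
  rw [← Int.add_emod_right]; exact emod_ne_aux n _ (by omega) (by omega)

theorem affT_left (n a b : ℤ) : affT n a b a = b := by
  simp [affT]

theorem affT_right (n a b : ℤ) (h1 : a < b) (h2 : b < a + n) : affT n a b b = a := by
  have := emod_ne_aux n (b - a) (by omega) (by omega)
  simp [affT, this]

theorem affT_other (n a b i : ℤ) (h1 : (i - a) % n ≠ 0) (h2 : (i - b) % n ≠ 0) :
    affT n a b i = i := by
  simp [affT, h1, h2]

theorem affT_add (n a b i : ℤ) : affT n a b (i + n) = affT n a b i + n := by
  have h1 : (i + n - a) % n = (i - a) % n := by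
    rw [← Int.add_emod_right (i - a)]; congr 1; ring
  have h2 : (i + n - b) % n = (i - b) % n := by
    rw [← Int.add_emod_right (i - b)]; congr 1; ring
  unfold affT
  rw [h1, h2]
  split_ifs <;> ring

theorem stmt4 (k : ℤ) (hk : 1 ≤ k) (u : ℤ → ℤ)
    (hu : IsAffinePerm (k + 1) u) (hg : IsGrassmannian (k + 1) u)
    (a b c d : ℤ) (hab : a < b) (hba : b - a ≤ k) (hcd : c < d) (hdc : d - c ≤ k)
    (h : (a < c ∧ c < b ∧ b < d) ∨ (b = c ∧ d - a > k + 1)) :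
    ¬ Def2 (k + 1) u a b c d ∧ ¬ Def2 (k + 1) u c d a b := by
  obtain ⟨-, hper, -⟩ := hu
  have hn := affT_add (k + 1)
  rcases h with ⟨h1, h2, h3⟩ | ⟨rfl, h1⟩
  · constructor
    · rintro ⟨⟨p1, p2, p3⟩, q1, q2, q3⟩
      have hc : affT (k + 1) a b c = c := affT_other _ _ _ _
        (emod_ne_aux _ _ (by omega) (by omega)) (emod_ne_aux' _ _ (by omega) (by omega))
      have hb := affT_right (k + 1) a b hab (by omega)
      have e1 := p3 c h1 h2
      have e2 := q3 b h2 h3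
      simp only [Function.comp, hc, hb] at *
      omega
    · rintro ⟨⟨p1, p2, p3⟩, q1, q2, q3⟩
      have hb : affT (k + 1) c d b = b := affT_other _ _ _ _
        (emod_ne_aux _ _ (by omega) (by omega)) (emod_ne_aux' _ _ (by omega) (by omega))
      have hc := affT_left (k + 1) c d
      have e1 := p3 b h2 h3
      have e2 := q3 c h1 h2
      simp only [Function.comp, hc, hb] at *
      omega
  · have key : u a ≤ 0 → 0 < u d → u d < u a + (k + 1) → False := by
      intro x y z
      have := hg (u d) (u a + (k + 1)) d (a + (k + 1)) (by omega) z (by omega) rfl (hper a)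
      omega
    have pd := hper (d - (k + 1))
    have pa := hper a
    rw [sub_add_cancel] at pd
    constructor
    · rintro ⟨⟨p1, p2, p3⟩, q1, q2, q3⟩
      have hd : affT (k + 1) a b d = d := by
        apply affT_other
        · rw [← Int.sub_emod_right]
          exact emod_ne_aux _ _ (by omega) (by omega)
        · exact emod_ne_aux _ _ (by omega) (by omega)
      have e1 := p3 (d - (k + 1)) (by omega) (by omega)
      have e2 := q3 (a + (k + 1)) (by omega) (by omega)
      rw [Function.comp, hd] at q2
      simp only [Function.comp, hn, affT_left, hper, hd,
        affT_right (k + 1) a b hab (by omega)] at e2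
      by_cases z : u d < u a + (k + 1)
      · exact key p1 q2 z
      · omega
    · rintro ⟨⟨p1, p2, p3⟩, q1, q2, q3⟩
      have ha : affT (k + 1) b d a = a := by
        apply affT_other
        · exact emod_ne_aux' _ _ (by omega) (by omega)
        · rw [← Int.add_emod_right]
          exact emod_ne_aux' _ _ (by omega) (by omega)
      have e1 := p3 (a + (k + 1)) (by omega) (by omega)
      have e2 := q3 (d - (k + 1)) (by omega) (by omega)
      have hd := hn b d (d - (k + 1))
      rw [sub_add_cancel, affT_right (k + 1) b d hcd (by omega)] at hd
      have hd' : affT (k + 1) b d (d - (k + 1)) = b - (k + 1) := by omega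
      have pb := hper (b - (k + 1))
      rw [sub_add_cancel] at pb
      rw [Function.comp, ha] at q1
      simp only [Function.comp, hd', affT_left, ha] at e2
      by_cases z : u d < u a + (k + 1)
      · exact key q1 p2 z
      · omega
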